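/- Uniqueness of the ground state of the octagon-square lattice on the plane: for all integers M, L ≥ 1, the hard-core fermion model on the planar octagon-square lattice O^plane_{M,L} (open boundary conditions in both directions) has a unique zero-energy ground state, i.e. dim ker H = 1. -/

import Mathlib

/-! ### The supersymmetric hard-core fermion model on a graph

For a finite simple graph `G` with totally ordered vertex set, the Hilbert space has an
orthonormal basis `{|I⟩ : I an independent set of G}`, the supercharge acts by
`Q|I⟩ = Σ_v ε(v,I) |I ∪ {v}⟩` (sum over `v ∉ I` with `I ∪ {v}` independent,
`ε(v,I) = (−1)^{#{w ∈ I : w < v}}`), and the Hamiltonian is `H = Q Q† + Q† Q`. -/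

open scoped BigOperators

/-- A finite set of vertices is independent if it contains no edge of `G`. -/
def Indep {V : Type*} (G : SimpleGraph V) (I : Finset V) : Prop :=
  ∀ ⦃a⦄, a ∈ I → ∀ ⦃b⦄, b ∈ I → ¬ G.Adj a b

lemma Indep.mono {V : Type*} {G : SimpleGraph V} {I J : Finset V}
    (hI : Indep G I) (hJI : J ⊆ I) : Indep G J :=
  fun _ ha _ hb => hI (hJI ha) (hJI hb)

/-- The independent sets of `G`, indexing the orthonormal basis of the Hilbert space. -/
def IndepSet {V : Type*} (G : SimpleGraph V) : Type _ := {I : Finset V // Indep G I}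

noncomputable instance {V : Type*} [Fintype V] [LinearOrder V] (G : SimpleGraph V) :
    Fintype (IndepSet G) := by
  classical exact Subtype.fintype _

instance {V : Type*} [LinearOrder V] (G : SimpleGraph V) : DecidableEq (IndepSet G) := by
  unfold IndepSet; infer_instance

/-- The Hilbert space `ℋ_G` of the hard-core fermion model: one orthonormal basis state
`|I⟩` for every independent set `I` of `G`. -/
noncomputable abbrev FockSpace {V : Type*} [Fintype V] [LinearOrder V] (G : SimpleGraph V) :=
  EuclideanSpace ℂ (IndepSet G)

/-- The fermionic sign `ε(v, I) = (−1)^{#{w ∈ I : w < v}}`. -/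
def fsign {V : Type*} [LinearOrder V] (I : Finset V) (v : V) : ℂ :=
  (-1) ^ (I.filter (· < v)).card

/-- The supercharge `Q`, with `Q|I⟩ = Σ_v ε(v,I) |I ∪ {v}⟩` over vertices `v ∉ I` such that
`I ∪ {v}` is independent; equivalently `(Qψ)(J) = Σ_{v ∈ J} ε(v, J∖{v}) ψ(J∖{v})`. -/
noncomputable def supercharge {V : Type*} [Fintype V] [LinearOrder V] (G : SimpleGraph V) :
    FockSpace G →ₗ[ℂ] FockSpace G where
  toFun ψ := WithLp.toLp 2 fun J => ∑ v ∈ J.1, fsign (J.1.erase v) v *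
      ψ ⟨J.1.erase v, J.2.mono (Finset.erase_subset v J.1)⟩
  map_add' ψ φ := by
    ext J
    exact (Finset.sum_congr rfl fun v _ => by exact mul_add _ _ _).trans Finset.sum_add_distrib
  map_smul' c ψ := by
    ext J
    exact (Finset.sum_congr rfl fun v _ => mul_left_comm _ c (ψ _)).trans
      (Finset.mul_sum _ _ _).symm

/-- The Hamiltonian `H = Q Q† + Q† Q` of the supersymmetric hard-core fermion model. -/
noncomputable def hamiltonian {V : Type*} [Fintype V] [LinearOrder V] (G : SimpleGraph V) :
    FockSpace G →ₗ[ℂ] FockSpace G :=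
  supercharge G ∘ₗ LinearMap.adjoint (supercharge G)
    + LinearMap.adjoint (supercharge G) ∘ₗ supercharge G

/-- The fermion-number operator `F`, with `F|I⟩ = |I| · |I⟩`. -/
noncomputable def numberOp {V : Type*} [Fintype V] [LinearOrder V] (G : SimpleGraph V) :
    FockSpace G →ₗ[ℂ] FockSpace G where
  toFun ψ := WithLp.toLp 2 fun I => (I.1.card : ℂ) * ψ I
  map_add' ψ φ := by ext I; simp [mul_add]
  map_smul' c ψ := by ext I; simp [mul_left_comm]

/-- The bosonic subspace: the span of the basis states `|I⟩` with `|I|` even. -/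
noncomputable def bosonic {V : Type*} [Fintype V] [LinearOrder V] (G : SimpleGraph V) :
    Submodule ℂ (FockSpace G) :=
  Submodule.span ℂ
    {e : FockSpace G | ∃ I : IndepSet G, Even I.1.card ∧ e = EuclideanSpace.single I 1}

/-- The fermionic subspace: the span of the basis states `|I⟩` with `|I|` odd. -/
noncomputable def fermionic {V : Type*} [Fintype V] [LinearOrder V] (G : SimpleGraph V) :
    Submodule ℂ (FockSpace G) :=
  Submodule.span ℂ
    {e : FockSpace G | ∃ I : IndepSet G, Odd I.1.card ∧ e = EuclideanSpace.single I 1}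

/-! ### The octagon-square (4-8) lattice in the plane -/

/-- Directed edge relation of the planar octagon-square lattice with `M × L` square
plaquettes: square-plaquette edges, horizontal linking edges `(i,j,1)-(i+1,j,3)` for
`0 ≤ i ≤ M−2`, and vertical linking edges `(i,j,2)-(i,j+1,0)` for `0 ≤ j ≤ L−2`, with no
wrap-around in either direction. -/
def octPlaneE (M L : ℕ) (a b : Fin M × Fin L × Fin 4) : Prop :=
  (a.1 = b.1 ∧ a.2.1 = b.2.1 ∧
    ((a.2.2 = 0 ∧ b.2.2 = 1) ∨ (a.2.2 = 1 ∧ b.2.2 = 2) ∨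
     (a.2.2 = 2 ∧ b.2.2 = 3) ∨ (a.2.2 = 3 ∧ b.2.2 = 0))) ∨
  ((b.1 : ℕ) = (a.1 : ℕ) + 1 ∧ a.2.1 = b.2.1 ∧ a.2.2 = 1 ∧ b.2.2 = 3) ∨
  (a.1 = b.1 ∧ (b.2.1 : ℕ) = (a.2.1 : ℕ) + 1 ∧ a.2.2 = 2 ∧ b.2.2 = 0)

/-- The planar octagon-square lattice `O^plane_{M,L}`, with open boundary conditions in
both directions. -/
def octPlane (M L : ℕ) : SimpleGraph (Fin M × Fin L × Fin 4) where
  Adj a b := a ≠ b ∧ (octPlaneE M L a b ∨ octPlaneE M L b a)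
  symm := by
    refine ⟨?_⟩
    rintro a b ⟨hne, h⟩
    exact ⟨hne.symm, by tauto⟩
  loopless := ⟨fun a h => h.1 rfl⟩

/-!
By Hodge theory the zero-energy states of `H = Q Q† + Q† Q` have the dimension of `ker Q / range Q`,
and `Q` is the coboundary operator of the independence complex of the graph, so this is its total
reduced Betti number. Deleting a vertex `v` puts the cochains in a short exact sequence whose outer
terms are the cochains of the deletion and of the link of `v`; if one of the two is a cone, the
Betti number is that of the other. Hence `v` may be removed as soon as some other vertex `u` has all
its neighbours among those of `v`, and a vertex carrying a leaf may be removed together with all its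
neighbours.

In a set of plaquettes, take one minimizing `i + j`. Its vertices `0` and `3` have no neighbours
outside it, so vertices `2` and `1` can be folded away in turn; then `3` is a leaf attached to `0`
and the whole plaquette disappears. Repeating this leads to the empty graph, whose total reduced
Betti number is `1`.
-/

namespace HardCoreFermion

section Differential

variable {𝕜 A B C : Type*} [Field 𝕜] [AddCommGroup A] [Module 𝕜 A] [AddCommGroup B] [Module 𝕜 B]
  [AddCommGroup C] [Module 𝕜 C]

/-- The dimension of the cohomology `ker d / range d` of a differential `d` (a linear map with
`d ∘ₗ d = 0`). There is no grading, so this is the sum of all Betti numbers. -/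
noncomputable def cohomologyRank (d : B →ₗ[𝕜] B) : ℕ :=
  Module.finrank 𝕜 (LinearMap.ker d ⧸ (LinearMap.range d).submoduleOf (LinearMap.ker d))

theorem cohomologyRank_neg (d : B →ₗ[𝕜] B) : cohomologyRank (-d) = cohomologyRank d := by
  rw [cohomologyRank, cohomologyRank, LinearMap.ker_neg, LinearMap.range_neg]

theorem cohomologyRank_eq_zero_of_homotopy {d h : B →ₗ[𝕜] B}
    (hdh : d ∘ₗ h + h ∘ₗ d = LinearMap.id) : cohomologyRank d = 0 := by
  have hker : LinearMap.ker d ≤ LinearMap.range d := fun x hx =>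
    ⟨h x, by simpa [LinearMap.mem_ker.1 hx] using LinearMap.congr_fun hdh x⟩
  have := Submodule.Quotient.subsingleton_iff.2 (Submodule.submoduleOf_eq_top.2 hker)
  exact Module.finrank_zero_of_subsingleton

section FiniteDimensional

variable [FiniteDimensional 𝕜 B]

theorem cohomologyRank_eq_zero_iff {d : B →ₗ[𝕜] B} :
    cohomologyRank d = 0 ↔ LinearMap.ker d ≤ LinearMap.range d := by
  rw [cohomologyRank, Module.finrank_zero_iff, Submodule.Quotient.subsingleton_iff,
    Submodule.submoduleOf_eq_top]

theorem cohomologyRank_add_finrank_range {d : B →ₗ[𝕜] B} (hd : d ∘ₗ d = 0) :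
    cohomologyRank d + Module.finrank 𝕜 (LinearMap.range d) =
      Module.finrank 𝕜 (LinearMap.ker d) := by
  rw [← (Submodule.submoduleOfEquivOfLe (LinearMap.range_le_ker_iff.2 hd)).finrank_eq]
  exact Submodule.finrank_quotient_add_finrank _

theorem cohomologyRank_add_two_mul_finrank_range {d : B →ₗ[𝕜] B} (hd : d ∘ₗ d = 0) :
    cohomologyRank d + 2 * Module.finrank 𝕜 (LinearMap.range d) = Module.finrank 𝕜 B := by
  have hker := cohomologyRank_add_finrank_range hd
  have hrank := LinearMap.finrank_range_add_finrank_ker d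
  lia

theorem cohomologyRank_conj (e : B ≃ₗ[𝕜] C) {d : B →ₗ[𝕜] B} (hd : d ∘ₗ d = 0) :
    cohomologyRank (e.conj d) = cohomologyRank d := by
  have := e.finiteDimensional
  have hd' : e.conj d ∘ₗ e.conj d = 0 := by rw [← LinearEquiv.conj_comp, hd, map_zero]
  have hrange : LinearMap.range (e.conj d) = (LinearMap.range d).map (e : B →ₗ[𝕜] C) := by
    rw [LinearEquiv.conj_apply, LinearEquiv.range_comp, LinearMap.range_comp]
  have hB := cohomologyRank_add_two_mul_finrank_range hd
  have hC := cohomologyRank_add_two_mul_finrank_range hd'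
  rw [hrange, LinearEquiv.finrank_map_eq, ← e.finrank_eq] at hC
  lia

end FiniteDimensional

section ShortExact

variable {dA : A →ₗ[𝕜] A} {dB : B →ₗ[𝕜] B} {dC : C →ₗ[𝕜] C} {i : A →ₗ[𝕜] B} {p : B →ₗ[𝕜] C}

theorem map_range_le_range_inf_ker (hip : Function.Exact i p) (hi : i ∘ₗ dA = dB ∘ₗ i) :
    (LinearMap.range dA).map i ≤ LinearMap.range dB ⊓ LinearMap.ker p := by
  rintro _ ⟨_, ⟨a, rfl⟩, rfl⟩
  exact ⟨⟨i a, (LinearMap.congr_fun hi a).symm⟩, hip.apply_apply_eq_zero _⟩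

theorem range_inf_ker_le_map_range_of_acyclic_left (hip : Function.Exact i p)
    (hi_inj : Function.Injective i) (hi : i ∘ₗ dA = dB ∘ₗ i) (hdB : dB ∘ₗ dB = 0)
    (hA : LinearMap.ker dA ≤ LinearMap.range dA) :
    LinearMap.range dB ⊓ LinearMap.ker p ≤ (LinearMap.range dA).map i := by
  rintro _ ⟨⟨b, rfl⟩, hb⟩
  obtain ⟨a, ha⟩ := (hip _).1 hb
  refine ⟨a, hA (hi_inj ?_), ha⟩
  calc i (dA a) = dB (i a) := LinearMap.congr_fun hi a
    _ = dB (dB b) := by rw [ha]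
    _ = i 0 := by rw [map_zero]; exact LinearMap.congr_fun hdB b

theorem range_inf_ker_le_map_range_of_acyclic_right (hip : Function.Exact i p)
    (hp_surj : Function.Surjective p) (hi : i ∘ₗ dA = dB ∘ₗ i) (hp : p ∘ₗ dB = dC ∘ₗ p)
    (hdB : dB ∘ₗ dB = 0) (hC : LinearMap.ker dC ≤ LinearMap.range dC) :
    LinearMap.range dB ⊓ LinearMap.ker p ≤ (LinearMap.range dA).map i := by
  rintro _ ⟨⟨b, rfl⟩, hb⟩
  have hpb : dC (p b) = 0 := (LinearMap.congr_fun hp b).symm.trans hb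
  obtain ⟨c, hc⟩ := hC hpb
  obtain ⟨b', rfl⟩ := hp_surj c
  have hdiff : p (b - dB b') = 0 := by
    rw [map_sub, ← hc, sub_eq_zero]
    exact (LinearMap.congr_fun hp b').symm
  obtain ⟨a, ha⟩ := (hip _).1 hdiff
  refine ⟨dA a, ⟨a, rfl⟩, ?_⟩
  calc i (dA a) = dB (i a) := LinearMap.congr_fun hi a
    _ = dB b - dB (dB b') := by rw [ha, map_sub]
    _ = dB b := by rw [show dB (dB b') = 0 from LinearMap.congr_fun hdB b', sub_zero]

theorem finrank_range_eq_add [FiniteDimensional 𝕜 B] (hi_inj : Function.Injective i)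
    (hp_surj : Function.Surjective p) (hp : p ∘ₗ dB = dC ∘ₗ p)
    (hinf : LinearMap.range dB ⊓ LinearMap.ker p = (LinearMap.range dA).map i) :
    Module.finrank 𝕜 (LinearMap.range dB) =
      Module.finrank 𝕜 (LinearMap.range dA) + Module.finrank 𝕜 (LinearMap.range dC) := by
  have hmap : (LinearMap.range dB).map p = LinearMap.range dC := by
    rw [← LinearMap.range_comp, hp, LinearMap.range_comp_of_range_eq_top _
      (LinearMap.range_eq_top.2 hp_surj)]
  have hker := LinearMap.finrank_range_add_finrank_ker (p.domRestrict (LinearMap.range dB))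
  rw [LinearMap.range_domRestrict, hmap, LinearMap.ker_domRestrict,
    ← Submodule.finrank_map_subtype_eq, Submodule.map_comap_subtype, hinf,
    ← (Submodule.equivMapOfInjective i hi_inj _).finrank_eq] at hker
  lia

/-- The long exact cohomology sequence collapses when one of the outer terms is acyclic. -/
theorem cohomologyRank_eq_add_of_exact [FiniteDimensional 𝕜 B] (hi_inj : Function.Injective i)
    (hip : Function.Exact i p) (hp_surj : Function.Surjective p) (hi : i ∘ₗ dA = dB ∘ₗ i)
    (hp : p ∘ₗ dB = dC ∘ₗ p) (hdA : dA ∘ₗ dA = 0) (hdB : dB ∘ₗ dB = 0) (hdC : dC ∘ₗ dC = 0)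
    (hac : cohomologyRank dA = 0 ∨ cohomologyRank dC = 0) :
    cohomologyRank dB = cohomologyRank dA + cohomologyRank dC := by
  have := FiniteDimensional.of_injective i hi_inj
  have := FiniteDimensional.of_surjective p hp_surj
  have hinf : LinearMap.range dB ⊓ LinearMap.ker p ≤ (LinearMap.range dA).map i := by
    rcases hac with hA | hC
    · exact range_inf_ker_le_map_range_of_acyclic_left hip hi_inj hi hdB
        (cohomologyRank_eq_zero_iff.1 hA)
    · exact range_inf_ker_le_map_range_of_acyclic_right hip hp_surj hi hp hdB
        (cohomologyRank_eq_zero_iff.1 hC)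
  have hrange := finrank_range_eq_add hi_inj hp_surj hp
    (hinf.antisymm (map_range_le_range_inf_ker hip hi))
  have hdim := LinearMap.finrank_range_add_finrank_ker p
  have hA := cohomologyRank_add_two_mul_finrank_range hdA
  have hB := cohomologyRank_add_two_mul_finrank_range hdB
  have hC := cohomologyRank_add_two_mul_finrank_range hdC
  rw [LinearMap.exact_iff.1 hip, LinearMap.range_eq_top.2 hp_surj, finrank_top,
    LinearMap.finrank_range_of_inj hi_inj] at hdim
  lia

end ShortExact

end Differential

section Hodge

variable {𝕜 E : Type*} [RCLike 𝕜] [NormedAddCommGroup E] [InnerProductSpace 𝕜 E]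
  [FiniteDimensional 𝕜 E]

theorem ker_comp_adjoint_add_adjoint_comp (d : E →ₗ[𝕜] E) :
    LinearMap.ker (d ∘ₗ d.adjoint + d.adjoint ∘ₗ d) =
      (LinearMap.range d)ᗮ ⊓ LinearMap.ker d := by
  rw [LinearMap.orthogonal_range]
  refine le_antisymm (fun x hx => ?_) fun x ⟨hadj, hx⟩ => by
    simp [LinearMap.mem_ker.1 hadj, LinearMap.mem_ker.1 hx]
  have hnorm : ‖d.adjoint x‖ ^ 2 + ‖d x‖ ^ 2 = 0 := by
    have hinner := congrArg (fun y => RCLike.re (inner 𝕜 x y)) (LinearMap.mem_ker.1 hx)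
    simpa [inner_add_right, ← LinearMap.adjoint_inner_left, LinearMap.adjoint_inner_right,
      inner_self_eq_norm_sq] using hinner
  simpa [add_eq_zero_iff_of_nonneg] using hnorm

theorem finrank_ker_comp_adjoint_add_adjoint_comp {d : E →ₗ[𝕜] E} (hd : d ∘ₗ d = 0) :
    Module.finrank 𝕜 (LinearMap.ker (d ∘ₗ d.adjoint + d.adjoint ∘ₗ d)) = cohomologyRank d := by
  have hsum := Submodule.finrank_add_inf_finrank_orthogonal (LinearMap.range_le_ker_iff.2 hd)
  have hker := cohomologyRank_add_finrank_range hd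
  rw [ker_comp_adjoint_add_adjoint_comp]
  lia

end Hodge

section Sign

variable {V : Type*} [LinearOrder V]

theorem fsign_mul_self (I : Finset V) (v : V) : fsign I v * fsign I v = 1 := by
  rw [fsign, ← mul_pow]
  simp

theorem fsign_mul_fsign_insert {I : Finset V} {u w : V} (huw : u ≠ w) (hu : u ∉ I) (hw : w ∉ I) :
    fsign I w * fsign (insert w I) u = -(fsign I u * fsign (insert u I) w) := by
  simp only [fsign, Finset.filter_insert]
  rcases huw.lt_or_gt with h | h
  · rw [if_neg h.not_gt, if_pos h, Finset.card_insert_of_notMem (by simp [hu])]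
    ring
  · rw [if_pos h, if_neg h.not_gt, Finset.card_insert_of_notMem (by simp [hw])]
    ring

theorem fsign_mul_fsign {I : Finset V} {u w : V} (huw : u ≠ w) (hu : u ∉ I) (hw : w ∉ I) :
    fsign I w * fsign I u = -(fsign (insert w I) u * fsign (insert u I) w) := by
  linear_combination fsign (insert w I) u * fsign I u * fsign_mul_fsign_insert huw hu hw
    - fsign I w * fsign I u * fsign_mul_self (insert w I) u
    - fsign (insert w I) u * fsign (insert u I) w * fsign_mul_self I u

theorem fsign_erase_mul_fsign_erase_erase {J : Finset V} {u w : V} (huw : u ≠ w) (hu : u ∈ J)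
    (hw : w ∈ J) :
    fsign (J.erase w) w * fsign ((J.erase w).erase u) u =
      -(fsign (J.erase u) u * fsign ((J.erase u).erase w) w) := by
  have h := fsign_mul_fsign_insert (I := (J.erase w).erase u) huw (by simp) (by simp)
  rw [Finset.insert_erase (by simp [huw, hu]), Finset.erase_right_comm,
    Finset.insert_erase (by simp [huw.symm, hw])] at h
  rw [Finset.erase_right_comm (a := w)]
  linear_combination h

end Sign

section DeletionAndLink

variable {V : Type*} (K : LowerSet (Finset V)) (v : V)

/-- The deletion of the vertex `v` from an abstract simplicial complex `K`, which is encoded as the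
lower set of its faces, the empty set included. -/
def deletion : LowerSet (Finset V) where
  carrier := {I | I ∈ K ∧ v ∉ I}
  lower' _ _ hJI hI := ⟨K.lower hJI hI.1, fun hv => hI.2 (hJI hv)⟩

/-- Restriction of cochains of `K` to the faces that avoid `v`. -/
def restrictToDeletion : (K → ℂ) →ₗ[ℂ] (deletion K v → ℂ) :=
  LinearMap.funLeft ℂ ℂ fun J => ⟨J.1, J.2.1⟩

theorem restrictToDeletion_surjective : Function.Surjective (restrictToDeletion K v) :=
  LinearMap.funLeft_surjective_of_injective _ _ _ fun _ _ h =>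
    Subtype.ext (Subtype.mk.inj h)

variable [DecidableEq V]

/-- The link of the vertex `v` in `K`: the sets of vertices that, joined with `v`, form a face. -/
def link : LowerSet (Finset V) where
  carrier := {I | insert v I ∈ K ∧ v ∉ I}
  lower' _ _ hJI hI := ⟨K.lower (Finset.insert_subset_insert v hJI) hI.1, fun hv => hI.2 (hJI hv)⟩

variable {K v} in
theorem erase_mem_link {J : Finset V} (hJ : J ∈ K) (hv : v ∈ J) : J.erase v ∈ link K v :=
  ⟨by rwa [Finset.insert_erase hv], Finset.notMem_erase v J⟩

end DeletionAndLink

section Coboundary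

variable {V : Type*} [LinearOrder V] (K : LowerSet (Finset V))

/-- The coboundary operator on the complex-valued cochains of an abstract simplicial complex.
The empty set counts as a face, so its cohomology is the reduced one. -/
noncomputable def coboundary : (K → ℂ) →ₗ[ℂ] (K → ℂ) where
  toFun f J := ∑ w ∈ J.1, fsign (J.1.erase w) w *
    f ⟨J.1.erase w, K.lower (Finset.erase_subset w J.1) J.2⟩
  map_add' f g := by ext J; simp [mul_add, Finset.sum_add_distrib]
  map_smul' c f := by ext J; simp [Finset.mul_sum, mul_left_comm]

theorem coboundary_apply (f : K → ℂ) (J : K) :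
    coboundary K f J = ∑ w ∈ J.1, fsign (J.1.erase w) w *
      f ⟨J.1.erase w, K.lower (Finset.erase_subset w J.1) J.2⟩ := rfl

theorem coboundary_comp_coboundary : coboundary K ∘ₗ coboundary K = 0 := by
  ext f J
  refine self_eq_neg.1 ?_
  simp only [LinearMap.comp_apply, coboundary_apply, Finset.mul_sum]
  conv_lhs => rw [Finset.sum_comm' (t' := J.1) (s' := fun u => J.1.erase u)
    (by intro w u; simp only [Finset.mem_erase]; tauto)]
  simp only [← Finset.sum_neg_distrib]
  refine Finset.sum_congr rfl fun u hu => ?_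
  refine Finset.sum_congr rfl fun w hw => ?_
  obtain ⟨hwu, hw⟩ := Finset.mem_erase.1 hw
  rw [← mul_assoc, fsign_erase_mul_fsign_erase_erase hwu.symm hu hw, neg_mul, mul_assoc]
  simp only [Finset.erase_right_comm (a := w)]

/-- The total reduced Betti number of an abstract simplicial complex. -/
noncomputable def totalBetti : ℕ := cohomologyRank (coboundary K)

end Coboundary

section Link

variable {V : Type*} [LinearOrder V] (K : LowerSet (Finset V)) (v : V)

/-- The embedding of the cochains of the link of `v` as the cochains of `K` supported on the faces
that contain `v`. The factor `fsign` makes it anticommute with the coboundaries. -/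
noncomputable def extendFromLink : (link K v → ℂ) →ₗ[ℂ] (K → ℂ) where
  toFun f J := if hv : v ∈ J.1 then
    fsign (J.1.erase v) v * f ⟨J.1.erase v, erase_mem_link J.2 hv⟩ else 0
  map_add' f g := by ext J; by_cases hv : v ∈ J.1 <;> simp [hv, mul_add]
  map_smul' c f := by ext J; by_cases hv : v ∈ J.1 <;> simp [hv, mul_left_comm]

theorem restrictToDeletion_comp_coboundary :
    restrictToDeletion K v ∘ₗ coboundary K = coboundary (deletion K v) ∘ₗ restrictToDeletion K v :=
  rfl

variable {K v} in
theorem fsign_mul_extendFromLink_insert (f : link K v → ℂ) {I : Finset V} (hI : I ∈ link K v) :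
    fsign I v * extendFromLink K v f ⟨insert v I, hI.1⟩ = f ⟨I, hI⟩ := by
  simp [extendFromLink, Finset.erase_insert hI.2, ← mul_assoc, fsign_mul_self]

theorem extendFromLink_injective : Function.Injective (extendFromLink K v) := by
  intro f g hfg
  ext ⟨I, hI⟩
  rw [← fsign_mul_extendFromLink_insert f hI, hfg, fsign_mul_extendFromLink_insert g hI]

theorem exact_extendFromLink_restrictToDeletion :
    Function.Exact (extendFromLink K v) (restrictToDeletion K v) := by
  intro f
  constructor
  · intro hf
    refine ⟨fun I => fsign I.1 v * f ⟨insert v I.1, I.2.1⟩, ?_⟩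
    ext ⟨J, hJ⟩
    by_cases hv : v ∈ J
    · simp [extendFromLink, hv, ← mul_assoc, fsign_mul_self, Finset.insert_erase hv]
    · have hfJ : f ⟨J, hJ⟩ = 0 := congrFun hf ⟨J, hJ, hv⟩
      simp [extendFromLink, hv, hfJ]
  · rintro ⟨g, rfl⟩
    ext ⟨J, hJ⟩
    exact dif_neg hJ.2

/-- The sign is that of the shift by one in degree. -/
theorem extendFromLink_comp_neg_coboundary :
    extendFromLink K v ∘ₗ (-coboundary (link K v)) = coboundary K ∘ₗ extendFromLink K v := by
  ext f ⟨J, hJ⟩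
  by_cases hv : v ∈ J
  · simp only [LinearMap.comp_apply, LinearMap.neg_apply, Pi.neg_apply, coboundary_apply,
      extendFromLink, LinearMap.coe_mk, AddHom.coe_mk, hv, dif_pos]
    rw [← Finset.add_sum_erase J _ hv, dif_neg (Finset.notMem_erase v J), mul_zero, zero_add,
      mul_neg, Finset.mul_sum, ← Finset.sum_neg_distrib]
    refine Finset.sum_congr rfl fun w hw => ?_
    obtain ⟨hwv, hw⟩ := Finset.mem_erase.1 hw
    rw [dif_pos (by simp [hv, hwv.symm]), ← mul_assoc, ← mul_assoc,
      fsign_erase_mul_fsign_erase_erase hwv.symm hv hw, neg_mul]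
    simp only [Finset.erase_right_comm (a := w)]
  · simp [extendFromLink, coboundary_apply, hv]

/-- An acyclic link makes the deletion of `v` a cohomology isomorphism; an acyclic deletion
identifies `K` with the suspension of the link, up to cohomology. -/
theorem totalBetti_eq_deletion_add_link [Finite V]
    (hac : totalBetti (link K v) = 0 ∨ totalBetti (deletion K v) = 0) :
    totalBetti K = totalBetti (deletion K v) + totalBetti (link K v) := by
  rw [totalBetti, ← cohomologyRank_neg] at hac
  have hneg : (-coboundary (link K v)) ∘ₗ (-coboundary (link K v)) = 0 := by
    rw [LinearMap.neg_comp, LinearMap.comp_neg, neg_neg, coboundary_comp_coboundary]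
  have h := cohomologyRank_eq_add_of_exact (extendFromLink_injective K v)
    (exact_extendFromLink_restrictToDeletion K v) (restrictToDeletion_surjective K v)
    (extendFromLink_comp_neg_coboundary K v) (restrictToDeletion_comp_coboundary K v)
    hneg (coboundary_comp_coboundary K) (coboundary_comp_coboundary _) hac
  rw [cohomologyRank_neg, add_comm] at h
  exact h

end Link

section Cone

variable {V : Type*} [LinearOrder V] {K : LowerSet (Finset V)} {v : V}

/-- The contraction of cochains towards the apex `v` of a cone `K`. -/
noncomputable def coneHomotopy (hcone : ∀ I ∈ K, insert v I ∈ K) : (K → ℂ) →ₗ[ℂ] (K → ℂ) where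
  toFun f I := if v ∈ I.1 then 0 else fsign I.1 v * f ⟨insert v I.1, hcone I.1 I.2⟩
  map_add' f g := by ext I; by_cases hv : v ∈ I.1 <;> simp [hv, mul_add]
  map_smul' c f := by ext I; by_cases hv : v ∈ I.1 <;> simp [hv, mul_left_comm]

theorem coneHomotopy_apply_of_mem {hcone : ∀ I ∈ K, insert v I ∈ K} (f : K → ℂ) {I : K}
    (hv : v ∈ I.1) : coneHomotopy hcone f I = 0 :=
  if_pos hv

theorem coneHomotopy_apply_of_notMem {hcone : ∀ I ∈ K, insert v I ∈ K} (f : K → ℂ) {I : K}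
    (hv : v ∉ I.1) :
    coneHomotopy hcone f I = fsign I.1 v * f ⟨insert v I.1, hcone I.1 I.2⟩ :=
  if_neg hv

theorem coboundary_comp_coneHomotopy_add (hcone : ∀ I ∈ K, insert v I ∈ K) :
    coboundary K ∘ₗ coneHomotopy hcone + coneHomotopy hcone ∘ₗ coboundary K = LinearMap.id := by
  refine LinearMap.ext fun f => funext fun ⟨J, hJ⟩ => ?_
  simp only [LinearMap.add_apply, LinearMap.comp_apply, Pi.add_apply, LinearMap.id_apply]
  by_cases hv : v ∈ J
  · rw [coneHomotopy_apply_of_mem _ hv, add_zero, coboundary_apply,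
      Finset.sum_eq_single_of_mem v hv]
    · rw [coneHomotopy_apply_of_notMem _ (Finset.notMem_erase v J), ← mul_assoc, fsign_mul_self,
        one_mul]
      simp only [Finset.insert_erase hv]
    · intro w _ hwv
      rw [coneHomotopy_apply_of_mem _ (by simp [hv, hwv.symm]), mul_zero]
  · rw [coneHomotopy_apply_of_notMem _ hv, coboundary_apply, coboundary_apply,
      Finset.sum_insert hv, mul_add, ← mul_assoc]
    simp only [Finset.erase_insert hv, fsign_mul_self, one_mul, Finset.mul_sum]
    rw [add_left_comm, ← Finset.sum_add_distrib, Finset.sum_eq_zero, add_zero]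
    intro w hw
    have hvw : v ≠ w := fun h => hv (h ▸ hw)
    rw [coneHomotopy_apply_of_notMem _ (by simp [hv])]
    simp only [Finset.erase_insert_of_ne hvw, ← mul_assoc]
    have hsign := fsign_mul_fsign (I := J.erase w) hvw (by simp [hv]) (by simp)
    rw [Finset.insert_erase hw] at hsign
    linear_combination f ⟨insert v (J.erase w), _⟩ * hsign

theorem totalBetti_eq_zero_of_cone (hcone : ∀ I ∈ K, insert v I ∈ K) :
    totalBetti K = 0 :=
  cohomologyRank_eq_zero_of_homotopy (coboundary_comp_coneHomotopy_add hcone)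

end Cone

section IndepComplex

variable {V : Type*} (G : SimpleGraph V) (S : Set V)

/-- The independence complex of the subgraph of `G` induced on `S`, whose faces are the
independent sets contained in `S`. -/
def indepComplex : LowerSet (Finset V) where
  carrier := {I | ↑I ⊆ S ∧ Indep G I}
  lower' _ _ hJI hI := ⟨fun _ hx => hI.1 (hJI hx), hI.2.mono hJI⟩

variable {G S}

theorem mem_indepComplex {I : Finset V} : I ∈ indepComplex G S ↔ ↑I ⊆ S ∧ Indep G I := Iff.rfl

theorem indep_insert [DecidableEq V] {v : V} {I : Finset V} :
    Indep G (insert v I) ↔ (∀ x ∈ I, ¬ G.Adj v x) ∧ Indep G I := by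
  simp only [Indep, Finset.mem_insert, forall_eq_or_imp, G.irrefl, not_false_eq_true, true_and]
  grind [G.adj_comm]

theorem deletion_indepComplex (v : V) :
    deletion (indepComplex G S) v = indepComplex G (S \ {v}) := by
  ext I
  change (_ ∧ _) ∧ _ ↔ _ ∧ _
  rw [Set.subset_sdiff, Set.disjoint_singleton_right, Finset.mem_coe]
  tauto

theorem link_indepComplex [DecidableEq V] {v : V} (hv : v ∈ S) :
    link (indepComplex G S) v = indepComplex G (S \ insert v (G.neighborSet v)) := by
  ext I
  change (_ ∧ _) ∧ _ ↔ _ ∧ _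
  rw [Finset.coe_insert, Set.insert_subset_iff, indep_insert, Set.subset_sdiff,
    Set.disjoint_insert_right, Set.disjoint_left]
  simp only [hv, true_and, Finset.mem_coe, SimpleGraph.mem_neighborSet]
  tauto

variable [LinearOrder V]

theorem totalBetti_indepComplex_empty : totalBetti (indepComplex G ∅) = 1 := by
  have hface : ∀ I : indepComplex G ∅, I.1 = ∅ := fun I => by simpa using I.2.1
  have : Unique (indepComplex G ∅) :=
    { default := ⟨∅, by simp [mem_indepComplex, Indep]⟩
      uniq := fun I => Subtype.ext (hface I) }
  have hdim := cohomologyRank_add_two_mul_finrank_range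
    (coboundary_comp_coboundary (indepComplex G ∅))
  rw [Module.finrank_fintype_fun_eq_card, Fintype.card_unique] at hdim
  rw [totalBetti]
  lia

theorem totalBetti_indepComplex_eq_zero_of_isolated {u : V} (hu : u ∈ S)
    (hiso : ∀ x ∈ S, ¬ G.Adj u x) : totalBetti (indepComplex G S) = 0 := by
  refine totalBetti_eq_zero_of_cone (v := u) fun I ⟨hIS, hI⟩ => ⟨?_, ?_⟩
  · rw [Finset.coe_insert]
    exact Set.insert_subset hu hIS
  · exact indep_insert.2 ⟨fun x hx => hiso x (hIS hx), hI⟩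

variable [Finite V]

/-- The fold lemma: once `v` is occupied, `u` is isolated, so the link of `v` is a cone. -/
theorem totalBetti_indepComplex_sdiff_singleton {u v : V} (hu : u ∈ S) (hv : v ∈ S) (huv : u ≠ v)
    (hN : ∀ x ∈ S, G.Adj u x → G.Adj v x) :
    totalBetti (indepComplex G (S \ {v})) = totalBetti (indepComplex G S) := by
  have hlink : totalBetti (link (indepComplex G S) v) = 0 := by
    rw [link_indepComplex hv]
    refine totalBetti_indepComplex_eq_zero_of_isolated (u := u) ⟨hu, ?_⟩ ?_
    · rintro (rfl | hvu)
      · exact huv rfl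
      · exact G.irrefl (hN v hv (SimpleGraph.Adj.symm hvu))
    · exact fun x hx hux => hx.2 (Or.inr (hN x hx.1 hux))
  rw [totalBetti_eq_deletion_add_link _ v (Or.inl hlink), hlink, add_zero,
    deletion_indepComplex]

/-- If `v` is empty then the leaf `u` is isolated, so the deletion of `v` is a cone. -/
theorem totalBetti_indepComplex_sdiff_closedNeighborhood {u v : V} (hu : u ∈ S) (hv : v ∈ S)
    (huv : u ≠ v) (hleaf : ∀ x ∈ S, G.Adj u x → x = v) :
    totalBetti (indepComplex G (S \ insert v (G.neighborSet v))) =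
      totalBetti (indepComplex G S) := by
  have hdel : totalBetti (deletion (indepComplex G S) v) = 0 := by
    rw [deletion_indepComplex]
    exact totalBetti_indepComplex_eq_zero_of_isolated (u := u) ⟨hu, huv⟩
      fun x hx hux => hx.2 (hleaf x hx.1 hux)
  rw [totalBetti_eq_deletion_add_link _ v (Or.inr hdel), hdel, zero_add, link_indepComplex hv]

/-- Two adjacent corners `a`, `d` of a square `a b c d` without neighbours outside the square allow
folding away `c` and then `b`, after which `d` is a leaf attached to `a`. -/
theorem totalBetti_indepComplex_sdiff_square {a b c d : V} (hS : {a, b, c, d} ⊆ S) (hac : a ≠ c)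
    (hbd : b ≠ d) (hbc : G.Adj b c) (ha : ∀ x ∈ S, G.Adj a x ↔ x = b ∨ x = d)
    (hd : ∀ x ∈ S, G.Adj d x ↔ x = a ∨ x = c) :
    totalBetti (indepComplex G (S \ {a, b, c, d})) = totalBetti (indepComplex G S) := by
  have haS : a ∈ S := hS (by simp)
  have hbS : b ∈ S := hS (by simp)
  have hcS : c ∈ S := hS (by simp)
  have hdS : d ∈ S := hS (by simp)
  have hab : G.Adj a b := (ha b hbS).2 (Or.inl rfl)
  have had : G.Adj a d := (ha d hdS).2 (Or.inr rfl)
  have hdc : G.Adj d c := (hd c hcS).2 (Or.inr rfl)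
  have hrest : S \ {a, b, c, d} = ((S \ {c}) \ {b}) \ insert a (G.neighborSet a) := by
    ext x
    simp only [Set.mem_sdiff, Set.mem_insert_iff, Set.mem_singleton_iff,
      SimpleGraph.mem_neighborSet]
    grind
  calc totalBetti (indepComplex G (S \ {a, b, c, d}))
      = totalBetti (indepComplex G ((S \ {c}) \ {b})) := by
        rw [hrest]
        refine totalBetti_indepComplex_sdiff_closedNeighborhood (u := d) ?_ ?_ had.ne' ?_
        · exact ⟨⟨hdS, hdc.ne⟩, hbd.symm⟩
        · exact ⟨⟨haS, hac⟩, hab.ne⟩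
        · exact fun x hx hdx => ((hd x hx.1.1).1 hdx).resolve_right hx.1.2
    _ = totalBetti (indepComplex G (S \ {c})) := by
        refine totalBetti_indepComplex_sdiff_singleton (u := d) ⟨hdS, hdc.ne⟩ ⟨hbS, hbc.ne⟩
          hbd.symm fun x hx hdx => ?_
        rw [((hd x hx.1).1 hdx).resolve_right hx.2]
        exact hab.symm
    _ = totalBetti (indepComplex G S) := by
        refine totalBetti_indepComplex_sdiff_singleton haS hcS hac fun x hx hax => ?_
        rcases (ha x hx).1 hax with rfl | rfl
        · exact hbc.symm
        · exact hdc.symm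

end IndepComplex

section Supersymmetry

variable {V : Type*} [Fintype V] [LinearOrder V] (G : SimpleGraph V)

/-- The Fock space of `G` as the space of cochains of the independence complex of `G`. -/
noncomputable def cochainEquivFockSpace : (indepComplex G Set.univ → ℂ) ≃ₗ[ℂ] FockSpace G :=
  LinearEquiv.funCongrLeft ℂ ℂ
    (Equiv.subtypeEquivRight fun I => by simp [mem_indepComplex] :
      IndepSet G ≃ indepComplex G Set.univ) ≪≫ₗ
    (WithLp.linearEquiv 2 ℂ (IndepSet G → ℂ)).symm

theorem supercharge_eq_conj_coboundary :
    supercharge G = (cochainEquivFockSpace G).conj (coboundary (indepComplex G Set.univ)) :=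
  rfl

theorem finrank_ker_hamiltonian :
    Module.finrank ℂ (LinearMap.ker (hamiltonian G)) =
      totalBetti (indepComplex G Set.univ) := by
  have hsq : supercharge G ∘ₗ supercharge G = 0 := by
    rw [supercharge_eq_conj_coboundary, ← LinearEquiv.conj_comp, coboundary_comp_coboundary,
      map_zero]
  rw [hamiltonian, finrank_ker_comp_adjoint_add_adjoint_comp hsq, supercharge_eq_conj_coboundary,
    cohomologyRank_conj _ (coboundary_comp_coboundary _), totalBetti]

end Supersymmetry

section OctPlane

variable {M L : ℕ}

/-- The vertices of `octPlane M L` lying in the square plaquettes of `T`. -/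
def plaquetteVertices (T : Finset (Fin M × Fin L)) : Set (Fin M × Fin L × Fin 4) :=
  {x | (x.1, x.2.1) ∈ T}

theorem plaquetteVertices_empty : plaquetteVertices (∅ : Finset (Fin M × Fin L)) = ∅ := by
  simp [plaquetteVertices]

theorem plaquetteVertices_univ :
    plaquetteVertices (Finset.univ : Finset (Fin M × Fin L)) = Set.univ := by
  simp [plaquetteVertices]

theorem plaquetteVertices_insert_sdiff {T : Finset (Fin M × Fin L)} {i : Fin M} {j : Fin L}
    (hij : (i, j) ∉ T) :
    plaquetteVertices (insert (i, j) T) \ {(i, j, 0), (i, j, 1), (i, j, 2), (i, j, 3)} =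
      plaquetteVertices T := by
  ext ⟨i', j', k⟩
  have hk : k = 0 ∨ k = 1 ∨ k = 2 ∨ k = 3 := by lia
  simp only [plaquetteVertices, Set.mem_sdiff, Set.mem_ofPred_eq, Finset.mem_insert,
    Set.mem_insert_iff, Set.mem_singleton_iff, Prod.mk.injEq]
  grind

/-- Vertices `0` and `3` of the plaquette at `(i, j)` are linked only to the plaquettes at
`(i, j - 1)` and `(i - 1, j)`, where the sum of the coordinates is smaller. -/
theorem octPlane_adj_zero_iff {i : Fin M} {j : Fin L} {x : Fin M × Fin L × Fin 4}
    (hx : (i : ℕ) + j ≤ x.1 + x.2.1) :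
    (octPlane M L).Adj (i, j, 0) x ↔ x = (i, j, 1) ∨ x = (i, j, 3) := by
  obtain ⟨i', j', k⟩ := x
  simp only [octPlane, octPlaneE, ne_eq, Prod.mk.injEq, Fin.ext_iff]
  grind

theorem octPlane_adj_three_iff {i : Fin M} {j : Fin L} {x : Fin M × Fin L × Fin 4}
    (hx : (i : ℕ) + j ≤ x.1 + x.2.1) :
    (octPlane M L).Adj (i, j, 3) x ↔ x = (i, j, 0) ∨ x = (i, j, 2) := by
  obtain ⟨i', j', k⟩ := x
  simp only [octPlane, octPlaneE, ne_eq, Prod.mk.injEq, Fin.ext_iff]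
  grind

theorem totalBetti_indepComplex_plaquetteVertices [LinearOrder (Fin M × Fin L × Fin 4)]
    (T : Finset (Fin M × Fin L)) :
    totalBetti (indepComplex (octPlane M L) (plaquetteVertices T)) = 1 := by
  induction T using Finset.induction_on_min_value
    (fun q : Fin M × Fin L => (q.1 : ℕ) + q.2) with
  | empty =>
    rw [plaquetteVertices_empty]
    exact totalBetti_indepComplex_empty
  | insert p T hpT hmin ih =>
    obtain ⟨i, j⟩ := p
    have hle : ∀ x ∈ plaquetteVertices (insert (i, j) T), (i : ℕ) + j ≤ x.1 + x.2.1 := by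
      intro x hx
      rcases Finset.mem_insert.1 hx with hx | hx
      · obtain ⟨rfl, rfl⟩ := Prod.mk.inj hx
        exact le_rfl
      · exact hmin _ hx
    rw [← ih, ← plaquetteVertices_insert_sdiff hpT]
    refine (totalBetti_indepComplex_sdiff_square ?_ (by simp) (by simp) ?_
      (fun x hx => octPlane_adj_zero_iff (hle x hx))
      (fun x hx => octPlane_adj_three_iff (hle x hx))).symm
    · simp [Set.insert_subset_iff, plaquetteVertices]
    · simp [octPlane, octPlaneE]

end OctPlane

end HardCoreFermion

/-- For `M, L ≥ 1`, the hard-core fermion model on the planar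
octagon-square lattice `O^plane_{M,L}` has a unique zero-energy ground state. -/
theorem octagon_square_plane_ground_state_unique (M L : ℕ) (hM : 1 ≤ M) (hL : 1 ≤ L)
    [LinearOrder (Fin M × Fin L × Fin 4)] :
    Module.finrank ℂ ↥(LinearMap.ker (hamiltonian (octPlane M L))) = 1 := by
  rw [HardCoreFermion.finrank_ker_hamiltonian, ← HardCoreFermion.plaquetteVertices_univ]
  exact HardCoreFermion.totalBetti_indepComplex_plaquetteVertices Finset.univ
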